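/- For every positive integer d, r₂₄(d) > 0 if and only if d mod 16 ∉ {0, 7, 12, 15}. -/

import Mathlib

/-- `r₂₄(n)`: half the number of vectors `(a,b,c,d,e,f) ∈ ℤ⁶` with
`gcd(a,b,c,d,e,f) = 1`, `af − be + cd = 0` and `a²+b²+c²+d²+e²+f² = n`. -/
noncomputable def r24 (n : ℕ) : ℚ :=
  (Nat.card {w : Fin 6 → ℤ //
    Finset.univ.gcd w = 1 ∧
    w 0 * w 5 - w 1 * w 4 + w 2 * w 3 = 0 ∧
    (w 0) ^ 2 + (w 1) ^ 2 + (w 2) ^ 2 + (w 3) ^ 2 + (w 4) ^ 2 + (w 5) ^ 2 = (n : ℤ)} : ℚ) / 2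

/-!
Writing `w = (p, q')` with `p, q ∈ ℤ³` and `q'` a signed reversal of `q`, the Plücker relation
becomes `p ⬝ q = 0`, and then `p + q`, `p - q` both have norm `d`. Squares modulo 8 exclude
`d ≡ 7, 15 (mod 16)`; if `d ≡ 0, 12 (mod 16)`, then `p ± q` are twice vectors of norm
`d / 4 ≡ 0, 3 (mod 4)`, the parities of whose coordinates are determined by `d / 4`, so `p` and `q`
are both even.

Conversely, `n ≢ 0, 4, 7 (mod 8)` is a primitive sum of three squares. By Dirichlet's theorem and
quadratic reciprocity some `m = b n - 1` divides some `x² + b`; then `n` is a diagonal entry, in a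
row with an entry `1`, of a positive definite integer matrix of determinant `1`, and by Hermite's
reduction such a matrix of size at most `5` is a Gram matrix of integer vectors. For `d = 4 m` one
takes `p, q = u ± v`, where `u` is primitive of norm `m` and `v` is a cyclic shift of `u`.
-/

open Matrix
open scoped NumberTheorySymbols

/-! ### Condensation of matrices -/

section Condensation

variable {R : Type*} [CommRing R] {n : ℕ} {A : Matrix (Fin (n + 1)) (Fin (n + 1)) R}

/-- The Schur complement of the top left entry of `A`, multiplied by that entry: the matrix of the
`2 × 2` minors of `A` that contain the pivot `A 0 0`. It is integral where `A` is. -/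
def condensation (A : Matrix (Fin (n + 1)) (Fin (n + 1)) R) : Matrix (Fin n) (Fin n) R :=
  A 0 0 • A.submatrix Fin.succ Fin.succ - vecMulVec (vecTail (A.col 0)) (vecTail (A.row 0))

theorem condensation_apply (A : Matrix (Fin (n + 1)) (Fin (n + 1)) R) (i j : Fin n) :
    condensation A i j = A 0 0 * A i.succ j.succ - A i.succ 0 * A 0 j.succ :=
  rfl

theorem det_eq_mul_det_of_column_zero (hA : ∀ i : Fin n, A i.succ 0 = 0) :
    A.det = A 0 0 * (A.submatrix Fin.succ Fin.succ).det := by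
  simp [det_succ_column_zero, Fin.sum_univ_succ, hA]

theorem mul_det_condensation (A : Matrix (Fin (n + 1)) (Fin (n + 1)) R) :
    A 0 0 * (condensation A).det = A 0 0 ^ n * A.det := by
  let scaled : Matrix (Fin (n + 1)) (Fin (n + 1)) R :=
    of fun i j ↦ (vecCons 1 fun _ ↦ A 0 0 : Fin (n + 1) → R) i * A i j
  let cleared : Matrix (Fin (n + 1)) (Fin (n + 1)) R :=
    of (vecCons (A 0) fun i j ↦ A 0 0 * A i.succ j - A i.succ 0 * A 0 j)
  have det_scaled : scaled.det = A 0 0 ^ n * A.det := by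
    simp [scaled, det_mul_column, Fin.prod_univ_succ]
  have det_cleared : cleared.det = A 0 0 * (condensation A).det := by
    rw [det_eq_mul_det_of_column_zero fun i ↦ by simp [cleared, mul_comm]]
    rfl
  rw [← det_cleared, ← det_scaled]
  refine det_eq_of_forall_row_eq_smul_add_const (vecCons 0 fun i ↦ -A i.succ 0) 0 rfl fun i j ↦ ?_
  cases i using Fin.cases with
  | zero => simp [cleared, scaled]
  | succ i =>
    simp only [of_apply, cons_val', cons_val_succ, cons_val_zero, one_mul, neg_mul, cleared, scaled]
    ring

theorem isSymm_condensation (hA : A.IsSymm) : (condensation A).IsSymm := by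
  ext i j
  simp [condensation, vecMulVec_apply, vecTail, hA.apply, mul_comm]

theorem mul_dotProduct_mulVec_cons (hA : A.IsSymm) (t : R) (y : Fin n → R) :
    A 0 0 * (vecCons t y ⬝ᵥ A *ᵥ vecCons t y) =
      (A 0 0 * t + vecTail (A.row 0) ⬝ᵥ y) ^ 2 + y ⬝ᵥ condensation A *ᵥ y := by
  have col_eq_row : A.col 0 = A.row 0 := funext fun i ↦ hA.apply 0 i
  have head_mulVec : vecHead (A *ᵥ vecCons t y) = A 0 0 * t + vecTail (A.row 0) ⬝ᵥ y :=
    dotProduct_cons _ _ _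
  have tail_mulVec : vecTail (A *ᵥ vecCons t y) =
      t • vecTail (A.col 0) + A.submatrix Fin.succ Fin.succ *ᵥ y := by
    funext i
    exact (dotProduct_cons _ _ _).trans (by rw [mul_comm]; rfl)
  have hcond : y ⬝ᵥ condensation A *ᵥ y =
      A 0 0 * (y ⬝ᵥ A.submatrix Fin.succ Fin.succ *ᵥ y) - (vecTail (A.row 0) ⬝ᵥ y) ^ 2 := by
    simp only [condensation, col_eq_row, sub_mulVec, smul_mulVec, vecMulVec_mulVec,
      op_smul_eq_smul, dotProduct_comm y, sub_dotProduct, smul_dotProduct, smul_eq_mul,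
      sub_right_inj]
    ring
  rw [cons_dotProduct, head_mulVec, tail_mulVec, hcond, col_eq_row, dotProduct_add,
    dotProduct_smul, smul_eq_mul, dotProduct_comm y]
  ring

theorem eq_transpose_mul_self_of_condensation_eq (hA : A.IsSymm) (h : A 0 0 = 1)
    {B : Matrix (Fin n) (Fin n) R} (hB : condensation A = Bᵀ * B) :
    ∃ C : Matrix (Fin (n + 1)) (Fin (n + 1)) R, A = Cᵀ * C := by
  refine ⟨of (vecCons (A 0) fun i ↦ vecCons 0 (B i)), ?_⟩
  have hB' (i j : Fin n) : A i.succ j.succ = A 0 i.succ * A 0 j.succ + ∑ k, B k i * B k j := by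
    have hij := congr_fun₂ hB i j
    rw [condensation_apply, h, hA.apply 0 i.succ, mul_apply] at hij
    simp only [transpose_apply] at hij
    linear_combination hij
  ext i j
  refine Fin.cases ?_ (fun i ↦ ?_) i <;> refine Fin.cases ?_ (fun j ↦ ?_) j <;>
    simp [mul_apply, Fin.sum_univ_succ, h, hA.apply, hB']

variable [LinearOrder R] [IsStrictOrderedRing R] [StarRing R] [TrivialStar R]

theorem posDef_of_posDef_condensation (hA : A.IsSymm) (h0 : 0 < A 0 0)
    (h : (condensation A).PosDef) : A.PosDef := by
  refine .of_dotProduct_mulVec_pos (isHermitian_iff_isSymm.mpr hA)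
    fun x hx ↦ pos_of_mul_pos_right ?_ h0.le
  obtain ⟨t, y, rfl⟩ : ∃ t y, x = vecCons t y := ⟨x 0, vecTail x, (cons_head_tail x).symm⟩
  rw [star_trivial, mul_dotProduct_mulVec_cons hA]
  rcases eq_or_ne y 0 with rfl | hy
  · have ht : t ≠ 0 := by rintro rfl; exact hx cons_zero_zero
    simpa using sq_pos_of_ne_zero (mul_ne_zero h0.ne' ht)
  · exact add_pos_of_nonneg_of_pos (sq_nonneg _) (by simpa using h.dotProduct_mulVec_pos hy)

theorem posDef_condensation (hA : A.PosDef) : (condensation A).PosDef := by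
  have hsymm : A.IsSymm := isHermitian_iff_isSymm.mp hA.isHermitian
  have h0 : 0 < A 0 0 := hA.diag_pos
  refine .of_dotProduct_mulVec_pos (isHermitian_iff_isSymm.mpr (isSymm_condensation hsymm))
    fun y hy ↦ ?_
  have hx : vecCons (-(vecTail (A.row 0) ⬝ᵥ y)) (A 0 0 • y) ≠ 0 := fun hx ↦
    hy <| by simpa [h0.ne'] using congr_arg vecTail hx
  have hpos := mul_pos h0 (hA.dotProduct_mulVec_pos hx)
  rw [star_trivial, mul_dotProduct_mulVec_cons hsymm] at hpos
  simpa [mulVec_smul, h0] using hpos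

end Condensation

/-! ### Hermite reduction -/

section Completable

variable {R ι : Type*} [CommRing R] [Fintype ι] [DecidableEq ι]

/-- A vector that extends to a basis of the free module `ι → R`, i.e. is a column of an invertible
matrix. -/
def IsCompletable (x : ι → R) : Prop :=
  ∃ (U : GL ι R) (i : ι), U.1.col i = x

theorem IsCompletable.exists_col_eq {x : ι → R} (hx : IsCompletable x) (j : ι) :
    ∃ U : GL ι R, U.1.col j = x := by
  obtain ⟨U, i, rfl⟩ := hx
  have : IsUnit (U.1.submatrix id (Equiv.swap i j)) := by
    rw [isUnit_iff_isUnit_det, det_permute']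
    exact ((Equiv.Perm.sign _).isUnit.map (Int.castRingHom R)).mul
      ((isUnit_iff_isUnit_det _).mp U.isUnit)
  exact ⟨this.unit, by ext; simp⟩

theorem IsCompletable.mulVec {x : ι → R} (hx : IsCompletable x) (U : GL ι R) :
    IsCompletable (U.1 *ᵥ x) := by
  obtain ⟨V, i, rfl⟩ := hx
  exact ⟨U * V, i, by rw [← mulVec_single_one, ← mulVec_single_one, Units.val_mul, mulVec_mulVec]⟩

theorem isCompletable_single (i : ι) : IsCompletable (Pi.single i 1 : ι → R) :=
  ⟨1, i, by rw [← mulVec_single_one, Units.val_one, one_mulVec]⟩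

theorem IsCompletable.cons {n : ℕ} {y : Fin n → R} (hy : IsCompletable y) (t : R) :
    IsCompletable (vecCons t y) := by
  obtain ⟨U, i, rfl⟩ := hy
  let V : Matrix (Fin (n + 1)) (Fin (n + 1)) R :=
    of (vecCons (vecCons 1 fun _ ↦ t) fun j ↦ vecCons 0 (U.1 j))
  have hV : IsUnit V := by
    rw [isUnit_iff_isUnit_det, det_eq_mul_det_of_column_zero fun _ ↦ rfl]
    exact isUnit_one.mul ((isUnit_iff_isUnit_det _).mp U.isUnit)
  refine ⟨hV.unit, i.succ, ?_⟩
  ext j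
  refine Fin.cases ?_ (fun j ↦ ?_) j <;> simp [V]

end Completable

section Congruence

variable {R ι : Type*} [CommRing R] [Fintype ι]

theorem dotProduct_transpose_mul_mul_mulVec (A U : Matrix ι ι R) (x : ι → R) :
    x ⬝ᵥ (Uᵀ * A * U) *ᵥ x = (U *ᵥ x) ⬝ᵥ A *ᵥ (U *ᵥ x) := by
  rw [← mulVec_mulVec, ← mulVec_mulVec, dotProduct_mulVec, vecMul_transpose]

theorem transpose_mul_mul_apply_self (A U : Matrix ι ι R) (i : ι) :
    (Uᵀ * A * U) i i = U.col i ⬝ᵥ A *ᵥ U.col i := by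
  classical
  rw [← mulVec_single_one U, ← dotProduct_transpose_mul_mul_mulVec, mulVec_single_one,
    single_one_dotProduct, col_apply]

variable [DecidableEq ι]

theorem det_transpose_mul_mul (A : Matrix ι ι ℤ) (U : GL ι ℤ) :
    (U.1ᵀ * A * U.1).det = A.det := by
  have := Int.isUnit_mul_self ((isUnit_iff_isUnit_det _).mp U.isUnit)
  rw [det_mul, det_mul, det_transpose]
  linear_combination A.det * this

theorem posDef_transpose_mul_mul [PartialOrder R] [StarRing R] [TrivialStar R] {A : Matrix ι ι R}
    (hA : A.PosDef) (U : GL ι R) :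
    (U.1ᵀ * A * U.1).PosDef := by
  simpa [star_eq_conjTranspose] using (IsUnit.posDef_star_left_conjugate_iff U.isUnit).mpr hA

end Congruence

section HermiteReduction

variable {n : ℕ}

/-- Minimality of the top left entry among the values that the form `x ↦ x ⬝ᵥ A *ᵥ x` takes on
basis vectors. This is the first of Hermite's reduction conditions; the others are imposed only
when they are needed, on the condensation of `A`. -/
def IsHermiteReduced (A : Matrix (Fin (n + 1)) (Fin (n + 1)) ℤ) : Prop :=
  ∀ x, IsCompletable x → A 0 0 ≤ x ⬝ᵥ A *ᵥ x

theorem exists_isHermiteReduced {A : Matrix (Fin (n + 1)) (Fin (n + 1)) ℤ} (hA : A.PosDef) :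
    ∃ U : GL (Fin (n + 1)) ℤ, IsHermiteReduced (U.1ᵀ * A * U.1) := by
  obtain ⟨x, hx, hmin⟩ := exists_minimalFor_of_wellFoundedLT IsCompletable
    (fun x : Fin (n + 1) → ℤ ↦ (x ⬝ᵥ A *ᵥ x).toNat) ⟨_, isCompletable_single 0⟩
  obtain ⟨U, rfl⟩ := hx.exists_col_eq 0
  refine ⟨U, fun y hy ↦ ?_⟩
  rw [transpose_mul_mul_apply_self, dotProduct_transpose_mul_mul_mulVec]
  have hle : (U.1.col 0 ⬝ᵥ A *ᵥ U.1.col 0).toNat ≤ ((U.1 *ᵥ y) ⬝ᵥ A *ᵥ (U.1 *ᵥ y)).toNat :=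
    (le_total _ _).elim id (hmin (hy.mulVec U))
  have hnonneg := hA.posSemidef.dotProduct_mulVec_nonneg (U.1 *ᵥ y)
  rw [star_trivial] at hnonneg
  omega

theorem exists_abs_two_mul_add_mul_le (x : ℤ) {m : ℤ} (hm : 0 < m) :
    ∃ k : ℤ, |2 * (m * k + x)| ≤ m := by
  refine ⟨-((2 * x + m) / (2 * m)), ?_⟩
  have h1 := Int.emod_add_mul_ediv (2 * x + m) (2 * m)
  have h2 := Int.emod_nonneg (2 * x + m) (b := 2 * m) (by omega)
  have h3 := Int.emod_lt_of_pos (2 * x + m) (b := 2 * m) (by omega)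
  rw [abs_le]
  constructor <;> linarith

theorem IsHermiteReduced.three_mul_sq_le {A : Matrix (Fin (n + 1)) (Fin (n + 1)) ℤ}
    (hred : IsHermiteReduced A) (hA : A.PosDef) {y : Fin n → ℤ} (hy : IsCompletable y) :
    3 * A 0 0 ^ 2 ≤ 4 * (y ⬝ᵥ condensation A *ᵥ y) := by
  have h0 : 0 < A 0 0 := hA.diag_pos
  obtain ⟨t, ht⟩ := exists_abs_two_mul_add_mul_le (vecTail (A.row 0) ⬝ᵥ y) h0
  have hmin := mul_le_mul_of_nonneg_left (hred _ (hy.cons t)) h0.le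
  rw [mul_dotProduct_mulVec_cons (isHermitian_iff_isSymm.mp hA.isHermitian)] at hmin
  have hsq := sq_le_sq' (neg_le_of_abs_le ht) (le_of_abs_le ht)
  linarith

theorem IsHermiteReduced.pow_le_det {A : Matrix (Fin (n + 1)) (Fin (n + 1)) ℤ}
    (hred : IsHermiteReduced A) (hA : A.PosDef) :
    3 ^ (n + 1).choose 2 * A 0 0 ^ (n + 1) ≤ 4 ^ (n + 1).choose 2 * A.det := by
  induction n with
  | zero => simp
  | succ n ih =>
    have h0 : 0 < A 0 0 := hA.diag_pos
    have hB := posDef_condensation hA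
    obtain ⟨U, hU⟩ := exists_isHermiteReduced hB
    have ihU := ih hU (posDef_transpose_mul_mul hB U)
    have hstep := hred.three_mul_sq_le hA ⟨U, 0, rfl⟩
    rw [transpose_mul_mul_apply_self, det_transpose_mul_mul] at ihU
    set m := U.1.col 0 ⬝ᵥ condensation A *ᵥ U.1.col 0
    have hdet : (condensation A).det = A 0 0 ^ n * A.det := by
      refine mul_left_cancel₀ h0.ne' ?_
      rw [mul_det_condensation]; ring
    have hchoose : (n + 1 + 1).choose 2 = (n + 1) + (n + 1).choose 2 := by
      rw [Nat.choose_succ_succ, Nat.choose_one_right]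
    refine le_of_mul_le_mul_left ?_ (pow_pos h0 n)
    calc A 0 0 ^ n * (3 ^ (n + 1 + 1).choose 2 * A 0 0 ^ (n + 1 + 1))
        = 3 ^ (n + 1).choose 2 * (3 * A 0 0 ^ 2) ^ (n + 1) := by rw [hchoose]; ring
      _ ≤ 3 ^ (n + 1).choose 2 * (4 * m) ^ (n + 1) := by gcongr
      _ = 4 ^ (n + 1) * (3 ^ (n + 1).choose 2 * m ^ (n + 1)) := by ring
      _ ≤ 4 ^ (n + 1) * (4 ^ (n + 1).choose 2 * (condensation A).det) := by gcongr
      _ = A 0 0 ^ n * (4 ^ (n + 1 + 1).choose 2 * A.det) := by rw [hchoose, hdet]; ring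

theorem IsHermiteReduced.zero_zero_eq_one {A : Matrix (Fin (n + 1)) (Fin (n + 1)) ℤ}
    (hred : IsHermiteReduced A) (hA : A.PosDef) (hdet : A.det = 1) (hn : n ≤ 4) : A 0 0 = 1 := by
  have h0 : 0 < A 0 0 := hA.diag_pos
  by_contra hne
  have h2 : 2 ≤ A 0 0 := by omega
  have hlt : (4 : ℤ) ^ (n + 1).choose 2 < 3 ^ (n + 1).choose 2 * 2 ^ (n + 1) := by
    interval_cases n <;> decide
  refine hlt.not_ge ?_
  calc (3 : ℤ) ^ (n + 1).choose 2 * 2 ^ (n + 1)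
      ≤ 3 ^ (n + 1).choose 2 * A 0 0 ^ (n + 1) := by gcongr
    _ ≤ 4 ^ (n + 1).choose 2 * A.det := hred.pow_le_det hA
    _ = 4 ^ (n + 1).choose 2 := by rw [hdet, mul_one]

theorem exists_eq_transpose_mul_self {A : Matrix (Fin n) (Fin n) ℤ} (hn : n ≤ 5)
    (hA : A.PosDef) (hdet : A.det = 1) : ∃ B : Matrix (Fin n) (Fin n) ℤ, A = Bᵀ * B := by
  induction n with
  | zero => exact ⟨0, Subsingleton.elim _ _⟩
  | succ n ih =>
    obtain ⟨U, hU⟩ := exists_isHermiteReduced hA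
    have hA' := posDef_transpose_mul_mul hA U
    have hdet' := (det_transpose_mul_mul A U).trans hdet
    have hone := hU.zero_zero_eq_one hA' hdet' (by omega)
    have hdetB := mul_det_condensation (U.1ᵀ * A * U.1)
    rw [hone, hdet', one_pow, one_mul, one_mul] at hdetB
    obtain ⟨B, hB⟩ := ih (by omega) (posDef_condensation hA') hdetB
    obtain ⟨C, hC⟩ := eq_transpose_mul_self_of_condensation_eq
      (isHermitian_iff_isSymm.mp hA'.isHermitian) hone hB
    refine ⟨C * (U⁻¹).1, ?_⟩
    calc A = (U.1 * U⁻¹.1)ᵀ * A * (U.1 * U⁻¹.1) := by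
          rw [Units.mul_inv, transpose_one, Matrix.one_mul, Matrix.mul_one]
      _ = (U⁻¹.1)ᵀ * (U.1ᵀ * A * U.1) * U⁻¹.1 := by
          simp only [transpose_mul, Matrix.mul_assoc]
      _ = (C * U⁻¹.1)ᵀ * (C * U⁻¹.1) := by
          rw [hC]; simp only [transpose_mul, Matrix.mul_assoc]

end HermiteReduction

/-! ### Primitive sums of three squares -/

theorem jacobiSym_neg_eq_swap {p b : ℕ} (hb : Odd b)
    (h : p % 4 = 1 ∨ p % 4 = 3 ∧ b % 4 = 3) : J(-b | p) = J(p | b) := by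
  have hp : Odd p := Nat.odd_iff.mpr (by omega)
  rw [jacobiSym.neg _ hp]
  rcases h with hp | ⟨hp, hb3⟩
  · rw [ZMod.χ₄_nat_one_mod_four hp, one_mul,
      jacobiSym.quadratic_reciprocity_one_mod_four' hb hp]
  · rw [ZMod.χ₄_nat_three_mod_four hp,
      jacobiSym.quadratic_reciprocity_three_mod_four hb3 hp, neg_one_mul, neg_neg]

theorem exists_prime_of_mul_add_one_eq {e q c n m : ℕ} (h : e * q + 1 = c * n) (hm : m ≠ 0)
    (hq : q.Coprime m) :
    ∃ p b : ℕ, p.Prime ∧ p ≡ q [MOD m] ∧ b ≡ c [MOD e * m] ∧ e * p + 1 = b * n := by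
  have hn : n ≠ 0 := by rintro rfl; omega
  have hqn : q.Coprime n := by
    refine Nat.Coprime.coprime_mul_left_right (k := c) ?_
    rw [← h]
    simp
  obtain ⟨p, hqp, hp, hmod⟩ :=
    Nat.forall_exists_prime_gt_and_modEq q (mul_ne_zero hm hn) (hq.mul_right hqn)
  obtain ⟨k, hk⟩ := (Nat.modEq_iff_dvd' hqp.le).mp hmod.symm
  obtain rfl : p = q + m * n * k := by omega
  refine ⟨_, c + e * m * k, hp, hmod.of_mul_right n, ?_, by linear_combination h⟩
  exact Nat.add_modEq_left_iff.mpr (dvd_mul_right _ _)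

theorem exists_dvd_sq_add_of_jacobiSym_eq_one {p : ℕ} (hp : p.Prime) {b : ℤ}
    (h : J(-b | p) = 1) : ∃ x : ℤ, (p : ℤ) ∣ x ^ 2 + b := by
  have := Fact.mk hp
  obtain ⟨y, hy⟩ := ZMod.isSquare_of_jacobiSym_eq_one h
  obtain ⟨x, rfl⟩ := ZMod.intCast_surjective y
  refine ⟨x, (ZMod.intCast_zmod_eq_zero_iff_dvd _ p).mp ?_⟩
  push_cast at hy ⊢
  linear_combination -hy

theorem exists_two_mul_dvd_sq_add {p b x : ℤ} (hp : Odd p) (hb : Odd b) (h : p ∣ x ^ 2 + b) :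
    ∃ y : ℤ, 2 * p ∣ y ^ 2 + b := by
  suffices h : ∃ y, Odd y ∧ p ∣ y ^ 2 + b by
    obtain ⟨y, hy, hdvd⟩ := h
    exact ⟨y, IsCoprime.mul_dvd (Int.isCoprime_two_left.mpr hp) (hy.pow.add_odd hb).two_dvd hdvd⟩
  rcases x.even_or_odd with hx | hx
  · exact ⟨x + p, hx.add_odd hp, by
      rw [show (x + p) ^ 2 + b = x ^ 2 + b + p * (2 * x + p) by ring]
      exact h.add (dvd_mul_right _ _)⟩
  · exact ⟨x, hx, h⟩

theorem jacobiSym_eq_one_of_add_one_eq {p b n : ℕ} (hpb : p + 1 = b * n) (hb : b % 4 = 1) :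
    J(p | b) = 1 := by
  have hmod : (p : ℤ) % b = -1 % b := by
    refine Int.ModEq.symm (Int.modEq_iff_dvd.mpr ⟨n, ?_⟩)
    rw [sub_neg_eq_add]; exact_mod_cast hpb
  rw [jacobiSym.mod_left' hmod, jacobiSym.at_neg_one (Nat.odd_iff.mpr (by omega)),
    ZMod.χ₄_nat_one_mod_four hb]

theorem jacobiSym_eq_one_of_two_mul_add_one_eq {p b n : ℕ} (hpb : 2 * p + 1 = b * n)
    (hb : b % 8 = 1 ∨ b % 8 = 3) : J(p | b) = 1 := by
  have hodd : Odd b := Nat.odd_iff.mpr (by omega)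
  have hmod : (4 * p : ℤ) % b = -2 % b := by
    refine Int.ModEq.symm (Int.modEq_iff_dvd.mpr ⟨2 * n, ?_⟩)
    zify at hpb
    linear_combination 2 * hpb
  have h := jacobiSym.mod_left' hmod
  rwa [jacobiSym.mul_left, jacobiSym.at_four hodd, one_mul, jacobiSym.at_neg_two hodd,
    ZMod.χ₈'_nat_eq_if_mod_eight, if_neg (by omega), if_pos hb] at h

theorem exists_dvd_sq_add_of_mod_four_eq_two {n : ℕ} (hn : n % 4 = 2) :
    ∃ (m b : ℕ) (x : ℤ), 0 < m ∧ m + 1 = b * n ∧ (m : ℤ) ∣ x ^ 2 + b := by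
  have hcop : (n - 1).Coprime 4 :=
    Nat.Coprime.pow_right 2 (Nat.coprime_two_right.mpr (Nat.odd_iff.mpr (by omega)))
  obtain ⟨p, b, hp, hpq, hbc, hpb⟩ :=
    exists_prime_of_mul_add_one_eq (e := 1) (q := n - 1) (c := 1) (n := n) (m := 4) (by omega)
      (by norm_num) hcop
  rw [Nat.ModEq] at hpq hbc
  rw [one_mul] at hpb
  have hJ : J(-b | p) = 1 := by
    rw [jacobiSym_neg_eq_swap (Nat.odd_iff.mpr (by omega)) (by omega),
      jacobiSym_eq_one_of_add_one_eq hpb (by omega)]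
  obtain ⟨x, hx⟩ := exists_dvd_sq_add_of_jacobiSym_eq_one hp hJ
  exact ⟨p, b, x, hp.pos, hpb, hx⟩

theorem exists_dvd_sq_add_of_mod_eight {n : ℕ} (hn : n % 8 = 1 ∨ n % 8 = 3 ∨ n % 8 = 5) :
    ∃ (m b : ℕ) (x : ℤ), 0 < m ∧ m + 1 = b * n ∧ (m : ℤ) ∣ x ^ 2 + b := by
  -- `b` and `p` inherit these residues, for which `J(-2 | b) = 1` and `J(-b | p) = J(p | b)`.
  obtain ⟨c, q, hq, hcq⟩ : ∃ c q : ℕ, 2 * q + 1 = c * n ∧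
      (c = 1 ∧ q % 4 = 1 ∨ c = 3 ∧ q % 4 = 1 ∨ c = 3 ∧ q % 4 = 3) := by
    rcases hn with h | h | h
    · exact ⟨3, (3 * n - 1) / 2, by omega, by omega⟩
    · exact ⟨1, (n - 1) / 2, by omega, by omega⟩
    · exact ⟨3, (3 * n - 1) / 2, by omega, by omega⟩
  have hcop : q.Coprime 4 :=
    Nat.Coprime.pow_right 2 (Nat.coprime_two_right.mpr (Nat.odd_iff.mpr (by omega)))
  obtain ⟨p, b, hp, hpq, hbc, hpb⟩ := exists_prime_of_mul_add_one_eq hq (by norm_num) hcop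
  rw [Nat.ModEq] at hpq hbc
  have hodd : Odd p ∧ Odd b := ⟨Nat.odd_iff.mpr (by omega), Nat.odd_iff.mpr (by omega)⟩
  have hJ : J(-b | p) = 1 := by
    rw [jacobiSym_neg_eq_swap hodd.2 (by omega),
      jacobiSym_eq_one_of_two_mul_add_one_eq hpb (by omega)]
  obtain ⟨y, hy⟩ := exists_dvd_sq_add_of_jacobiSym_eq_one hp hJ
  obtain ⟨x, hx⟩ :=
    exists_two_mul_dvd_sq_add (by exact_mod_cast hodd.1) (by exact_mod_cast hodd.2) hy
  exact ⟨2 * p, b, x, by have := hp.pos; omega, hpb, by exact_mod_cast hx⟩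

theorem univ_gcd_eq_one_iff {ι : Type*} [Fintype ι] {w : ι → ℤ} :
    Finset.univ.gcd w = 1 ↔ ∀ g, (∀ i, g ∣ w i) → IsUnit g := by
  refine ⟨fun h g hg ↦ isUnit_of_dvd_one (h ▸ Finset.dvd_gcd fun i _ ↦ hg i), fun h ↦ ?_⟩
  rw [← Finset.normalize_gcd, normalize_eq_one]
  exact h _ fun i ↦ Finset.gcd_dvd (Finset.mem_univ i)

theorem univ_gcd_eq_one_of_dotProduct_eq_one {ι : Type*} [Fintype ι] {u w : ι → ℤ}
    (h : u ⬝ᵥ w = 1) : Finset.univ.gcd u = 1 :=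
  univ_gcd_eq_one_iff.mpr fun _ hg ↦
    isUnit_of_dvd_one <| h ▸ Finset.dvd_sum fun i _ ↦ (hg i).mul_right (w i)

theorem posDef_of_mul_eq_sq_add {a b m n x : ℤ} (ha : 0 < a) (hb : 0 < b)
    (hm : m + 1 = b * n) (hx : a * m = x ^ 2 + b) :
    (!![a, x, 1; x, m, 0; 1, 0, n] : Matrix (Fin 3) (Fin 3) ℤ).PosDef := by
  set A : Matrix (Fin 3) (Fin 3) ℤ := !![a, x, 1; x, m, 0; 1, 0, n]
  have hA : A.IsSymm := by ext i j; fin_cases i <;> fin_cases j <;> rfl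
  have hpivot₁ : condensation A 0 0 = b := by
    change a * m - x * x = b
    linear_combination hx
  have hpivot₂ : condensation (condensation A) 0 0 = a := by
    change (a * m - x * x) * (a * n - 1 * 1) - (a * 0 - 1 * x) * (a * 0 - x * 1) = a
    linear_combination a * n * hx - a * hm
  refine posDef_of_posDef_condensation hA ha ?_
  refine posDef_of_posDef_condensation (isSymm_condensation hA) (hpivot₁ ▸ hb) ?_
  refine posDef_of_posDef_condensation (isSymm_condensation (isSymm_condensation hA))
    (hpivot₂ ▸ ha) ?_
  exact ⟨Subsingleton.elim _ _, fun x hx ↦ (hx (Subsingleton.elim _ _)).elim⟩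

theorem exists_primitive_of_dvd_sq_add {b m n x : ℤ} (hm : 0 < m) (hb : 0 < b)
    (hbn : m + 1 = b * n) (hx : m ∣ x ^ 2 + b) :
    ∃ u : Fin 3 → ℤ, Finset.univ.gcd u = 1 ∧ u ⬝ᵥ u = n := by
  obtain ⟨a, ha⟩ := hx
  have ha0 : 0 < a := pos_of_mul_pos_right (ha ▸ by positivity) hm.le
  have hdet : (!![a, x, 1; x, m, 0; 1, 0, n] : Matrix (Fin 3) (Fin 3) ℤ).det = 1 := by
    simp only [det_fin_three, of_apply, cons_val', cons_val_zero, cons_val_fin_one, cons_val_one,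
      cons_val, mul_zero, sub_zero, mul_one, add_zero, one_mul]
    linear_combination -hbn - n * ha
  obtain ⟨B, hB⟩ := exists_eq_transpose_mul_self (by norm_num)
    (posDef_of_mul_eq_sq_add ha0 hb hbn (by linear_combination -ha)) hdet
  have hgram (i j : Fin 3) : B.col i ⬝ᵥ B.col j = !![a, x, 1; x, m, 0; 1, 0, n] i j := by
    rw [hB]; rfl
  exact ⟨B.col 2, univ_gcd_eq_one_of_dotProduct_eq_one (hgram 2 0), hgram 2 2⟩

theorem exists_primitive_dotProduct_self_eq {n : ℕ} (hn₄ : n % 4 ≠ 0) (hn₈ : n % 8 ≠ 7) :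
    ∃ u : Fin 3 → ℤ, Finset.univ.gcd u = 1 ∧ u ⬝ᵥ u = n := by
  obtain ⟨m, b, x, hm, hbn, hx⟩ : ∃ (m b : ℕ) (x : ℤ), 0 < m ∧ m + 1 = b * n ∧
      (m : ℤ) ∣ x ^ 2 + b := by
    by_cases hn : n % 4 = 2
    · exact exists_dvd_sq_add_of_mod_four_eq_two hn
    · exact exists_dvd_sq_add_of_mod_eight (by omega)
  have hb : 0 < b := Nat.pos_of_ne_zero (by rintro rfl; omega)
  exact exists_primitive_of_dvd_sq_add (by exact_mod_cast hm) (by exact_mod_cast hb)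
    (by exact_mod_cast hbn) hx

/-! ### The norm modulo powers of two -/

theorem dotProduct_self_emod_eight_ne_seven (u : Fin 3 → ℤ) : u ⬝ᵥ u % 8 ≠ 7 := by
  intro h
  have hmod : ((u ⬝ᵥ u : ℤ) : ZMod 8) = 7 := by
    rw [← ZMod.intCast_mod, Nat.cast_ofNat, h]; rfl
  have key : ∀ a b c : ZMod 8, a * a + b * b + c * c ≠ 7 := by decide
  refine key (u 0) (u 1) (u 2) ?_
  rw [← hmod]
  simp [vec3_dotProduct]

theorem mul_self_emod_four (x : ℤ) : x * x % 4 = x % 2 := by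
  rcases x.even_or_odd with ⟨k, rfl⟩ | hx
  · rw [show (k + k) * (k + k) = 4 * (k * k) by ring]; omega
  · rw [← pow_two, Int.sq_mod_four_eq_one_of_odd hx, Int.odd_iff.mp hx]

theorem modEq_two_of_dotProduct_self_emod_four {u : Fin 3 → ℤ}
    (h : u ⬝ᵥ u % 4 = 0 ∨ u ⬝ᵥ u % 4 = 3) (i : Fin 3) : u i ≡ u ⬝ᵥ u [ZMOD 2] := by
  have hsq (j : Fin 3) := mul_self_emod_four (u j)
  have h₀ := hsq 0
  have h₁ := hsq 1
  have h₂ := hsq 2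
  rw [vec3_dotProduct] at h ⊢
  rw [Int.ModEq]
  fin_cases i <;> dsimp only [Fin.zero_eta, Fin.mk_one, Fin.reduceFinMk] <;> omega

theorem exists_odd_add_of_dotProduct_self_emod_four {u : Fin 3 → ℤ}
    (h : u ⬝ᵥ u % 4 = 1 ∨ u ⬝ᵥ u % 4 = 2) : ∃ i, Odd (u i + u (i + 1)) := by
  by_contra! heven
  simp only [Int.not_odd_iff] at heven
  have h₀ := mul_self_emod_four (u 0)
  have h₁ := mul_self_emod_four (u 1)
  have h₂ := mul_self_emod_four (u 2)
  have h₀₁ : (u 0 + u 1) % 2 = 0 := heven 0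
  have h₁₂ : (u 1 + u 2) % 2 = 0 := heven 1
  rw [vec3_dotProduct] at h
  omega

theorem exists_eq_two_smul_of_dotProduct_self_emod_four {u : Fin 3 → ℤ} (h : u ⬝ᵥ u % 4 = 0) :
    ∃ v : Fin 3 → ℤ, u = 2 • v := by
  have hdvd (i : Fin 3) : 2 ∣ u i := by
    have := modEq_two_of_dotProduct_self_emod_four (Or.inl h) i
    rw [Int.ModEq] at this
    omega
  choose v hv using hdvd
  exact ⟨v, funext fun i ↦ by rw [hv]; rfl⟩

/-! ### Orthogonal pairs and Plücker vectors -/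

theorem dotProduct_add_self {ι R : Type*} [Fintype ι] [CommSemiring R] (p q : ι → R) :
    (p + q) ⬝ᵥ (p + q) = p ⬝ᵥ p + 2 * (p ⬝ᵥ q) + q ⬝ᵥ q := by
  rw [add_dotProduct, dotProduct_add, dotProduct_add, dotProduct_comm q p]
  ring

theorem dotProduct_sub_self {ι R : Type*} [Fintype ι] [CommRing R] (p q : ι → R) :
    (p - q) ⬝ᵥ (p - q) = p ⬝ᵥ p - 2 * (p ⬝ᵥ q) + q ⬝ᵥ q := by
  rw [sub_dotProduct, dotProduct_sub, dotProduct_sub, dotProduct_comm q p]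
  ring

theorem add_dotProduct_sub {ι R : Type*} [Fintype ι] [CommRing R] (p q : ι → R) :
    (p + q) ⬝ᵥ (p - q) = p ⬝ᵥ p - q ⬝ᵥ q := by
  rw [add_dotProduct, dotProduct_sub, dotProduct_sub, dotProduct_comm q p]
  ring

theorem finite_setOf_sum_sq_eq {ι : Type*} [Fintype ι] (n : ℤ) :
    {w : ι → ℤ | ∑ i, w i ^ 2 = n}.Finite := by
  classical
  refine (Set.finite_Icc (fun _ ↦ -n) fun _ ↦ n).subset fun w hw ↦ ?_
  have habs (i : ι) : |w i| ≤ n := by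
    rw [Int.abs_eq_natAbs]
    refine (Int.natAbs_le_self_sq _).trans (hw ▸ ?_)
    exact Finset.single_le_sum (f := fun i ↦ w i ^ 2) (fun j _ ↦ sq_nonneg (w j))
      (Finset.mem_univ i)
  exact ⟨fun i ↦ (abs_le.mp (habs i)).1, fun i ↦ (abs_le.mp (habs i)).2⟩

/-- The parametrization of `ℤ⁶` by pairs of vectors in `ℤ³` under which the quadratic form
`af - be + cd` of the Plücker relation becomes `p ⬝ᵥ q`. -/
def pluckerVec (p q : Fin 3 → ℤ) : Fin 6 → ℤ := ![p 0, p 1, p 2, q 2, -q 1, q 0]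

/-- The coordinates of `p` and `q` together have no common divisor other than units; neither vector
needs to be primitive by itself. -/
def IsPrimitivePair {ι : Type*} (p q : ι → ℤ) : Prop :=
  ∀ g, (∀ i, g ∣ p i ∧ g ∣ q i) → IsUnit g

theorem exists_pluckerVec_eq (w : Fin 6 → ℤ) : ∃ p q, pluckerVec p q = w :=
  ⟨![w 0, w 1, w 2], ![w 5, -w 4, w 3], by ext i; fin_cases i <;> simp [pluckerVec]⟩

theorem forall_dvd_pluckerVec_iff {p q : Fin 3 → ℤ} {g : ℤ} :
    (∀ i, g ∣ pluckerVec p q i) ↔ ∀ i, g ∣ p i ∧ g ∣ q i := by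
  simp only [pluckerVec, Fin.forall_fin_succ, Fin.forall_fin_zero]
  simp only [Fin.isValue, cons_val_zero, Fin.succ_zero_eq_one, cons_val_one, Fin.succ_one_eq_two,
    cons_val, Fin.reduceSucc, dvd_neg, and_true]
  tauto

theorem univ_gcd_pluckerVec_eq_one_iff {p q : Fin 3 → ℤ} :
    Finset.univ.gcd (pluckerVec p q) = 1 ↔ IsPrimitivePair p q := by
  simp only [IsPrimitivePair, univ_gcd_eq_one_iff, forall_dvd_pluckerVec_iff]

theorem r24_pos_iff_exists_orthogonal {n : ℕ} :
    0 < r24 n ↔ ∃ p q : Fin 3 → ℤ, IsPrimitivePair p q ∧ p ⬝ᵥ q = 0 ∧ p ⬝ᵥ p + q ⬝ᵥ q = n := by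
  have hfinite : Finite {w : Fin 6 → ℤ // Finset.univ.gcd w = 1 ∧
      w 0 * w 5 - w 1 * w 4 + w 2 * w 3 = 0 ∧
      (w 0) ^ 2 + (w 1) ^ 2 + (w 2) ^ 2 + (w 3) ^ 2 + (w 4) ^ 2 + (w 5) ^ 2 = (n : ℤ)} :=
    (finite_setOf_sum_sq_eq (n : ℤ)).subset fun w hw ↦ by simpa [Fin.sum_univ_six] using hw.2.2
  have hquad (p q : Fin 3 → ℤ) : pluckerVec p q 0 * pluckerVec p q 5 -
      pluckerVec p q 1 * pluckerVec p q 4 + pluckerVec p q 2 * pluckerVec p q 3 = p ⬝ᵥ q := by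
    simp [pluckerVec, vec3_dotProduct]
  have hnorm (p q : Fin 3 → ℤ) : pluckerVec p q 0 ^ 2 + pluckerVec p q 1 ^ 2 +
      pluckerVec p q 2 ^ 2 + pluckerVec p q 3 ^ 2 + pluckerVec p q 4 ^ 2 + pluckerVec p q 5 ^ 2 =
      p ⬝ᵥ p + q ⬝ᵥ q := by
    simp only [pluckerVec, Fin.isValue, cons_val_zero, cons_val_one, cons_val, even_two,
      Even.neg_pow, vec3_dotProduct]
    ring
  rw [r24, div_pos_iff_of_pos_right two_pos, Nat.cast_pos, Nat.card_pos_iff, and_iff_left hfinite,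
    nonempty_subtype]
  constructor
  · rintro ⟨w, hw⟩
    obtain ⟨p, q, rfl⟩ := exists_pluckerVec_eq w
    rw [univ_gcd_pluckerVec_eq_one_iff, hquad, hnorm] at hw
    exact ⟨p, q, hw⟩
  · rintro ⟨p, q, h⟩
    refine ⟨pluckerVec p q, ?_⟩
    rwa [univ_gcd_pluckerVec_eq_one_iff, hquad, hnorm]

theorem exists_orthogonal_of_mod_four_ne_zero {n : ℕ} (hn₄ : n % 4 ≠ 0) (hn₈ : n % 8 ≠ 7) :
    ∃ p q : Fin 3 → ℤ, IsPrimitivePair p q ∧ p ⬝ᵥ q = 0 ∧ p ⬝ᵥ p + q ⬝ᵥ q = n := by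
  obtain ⟨u, hu, hun⟩ := exists_primitive_dotProduct_self_eq hn₄ hn₈
  refine ⟨u, 0, fun g hg ↦ univ_gcd_eq_one_iff.mp hu g fun i ↦ (hg i).1, dotProduct_zero u, ?_⟩
  rw [dotProduct_zero, add_zero, hun]

theorem exists_orthogonal_four_mul {m : ℕ} (hm : m % 4 = 1 ∨ m % 4 = 2) :
    ∃ p q : Fin 3 → ℤ, IsPrimitivePair p q ∧ p ⬝ᵥ q = 0 ∧ p ⬝ᵥ p + q ⬝ᵥ q = (4 * m : ℕ) := by
  obtain ⟨u, hu, hum⟩ := exists_primitive_dotProduct_self_eq (n := m) (by omega) (by omega)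
  obtain ⟨j, hj⟩ := exists_odd_add_of_dotProduct_self_emod_four (u := u) (by omega)
  let v : Fin 3 → ℤ := fun i ↦ u (i + 1)
  have hv : v ⬝ᵥ v = u ⬝ᵥ u := Equiv.sum_comp (Equiv.addRight 1) fun i ↦ u i * u i
  refine ⟨u + v, u - v, fun g hg ↦ ?_, ?_, ?_⟩
  · have hg₂ : IsCoprime g 2 :=
      (Int.isCoprime_two_right.mpr hj).of_isCoprime_of_dvd_left (hg j).1
    refine univ_gcd_eq_one_iff.mp hu g fun i ↦ hg₂.dvd_of_dvd_mul_left ?_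
    have := (hg i).1.add (hg i).2
    rwa [Pi.add_apply, Pi.sub_apply, add_add_sub_cancel, ← two_mul] at this
  · rw [add_dotProduct_sub, hv, sub_self]
  · rw [dotProduct_add_self, dotProduct_sub_self, hv, hum]
    push_cast
    ring

theorem IsPrimitivePair.mod_sixteen_ne {n : ℕ} {p q : Fin 3 → ℤ} (hprim : IsPrimitivePair p q)
    (horth : p ⬝ᵥ q = 0) (hnorm : p ⬝ᵥ p + q ⬝ᵥ q = n) : n % 16 ≠ 0 ∧ n % 16 ≠ 12 := by
  by_contra hn
  have hadd : (p + q) ⬝ᵥ (p + q) = n := by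
    linear_combination dotProduct_add_self p q + 2 * horth + hnorm
  have hsub : (p - q) ⬝ᵥ (p - q) = n := by
    linear_combination dotProduct_sub_self p q - 2 * horth + hnorm
  obtain ⟨u, hu⟩ := exists_eq_two_smul_of_dotProduct_self_emod_four (u := p + q) (by omega)
  obtain ⟨v, hv⟩ := exists_eq_two_smul_of_dotProduct_self_emod_four (u := p - q) (by omega)
  rw [hu, smul_dotProduct, dotProduct_smul, two_nsmul, two_nsmul] at hadd
  rw [hv, smul_dotProduct, dotProduct_smul, two_nsmul, two_nsmul] at hsub
  refine Int.prime_two.not_isUnit (hprim 2 fun i ↦ ?_)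
  have hui := modEq_two_of_dotProduct_self_emod_four (u := u) (by omega) i
  have hvi := modEq_two_of_dotProduct_self_emod_four (u := v) (by omega) i
  have hpq : p i + q i = 2 * u i := congr_fun hu i
  have hpq' : p i - q i = 2 * v i := congr_fun hv i
  rw [Int.ModEq] at hui hvi
  omega

theorem mod_eight_ne_seven_of_orthogonal {n : ℕ} {p q : Fin 3 → ℤ} (horth : p ⬝ᵥ q = 0)
    (hnorm : p ⬝ᵥ p + q ⬝ᵥ q = n) : n % 8 ≠ 7 := by
  have hmod := dotProduct_self_emod_eight_ne_seven (p + q)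
  rw [dotProduct_add_self, horth, mul_zero, add_zero, hnorm] at hmod
  exact_mod_cast hmod

/-- for every positive integer `d`, `r₂₄(d) > 0` if and only if
`d mod 16 ∉ {0, 7, 12, 15}`. -/
theorem r24_pos_iff (d : ℕ) (hd : 0 < d) :
    0 < r24 d ↔ ¬(d % 16 = 0 ∨ d % 16 = 7 ∨ d % 16 = 12 ∨ d % 16 = 15) := by
  rw [r24_pos_iff_exists_orthogonal]
  constructor
  · rintro ⟨p, q, hprim, horth, hnorm⟩
    have h₇ := mod_eight_ne_seven_of_orthogonal horth hnorm
    have h₀₁₂ := hprim.mod_sixteen_ne horth hnorm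
    omega
  · intro hmod
    by_cases h₄ : d % 4 = 0
    · obtain ⟨m, rfl⟩ := Nat.dvd_of_mod_eq_zero h₄
      exact exists_orthogonal_four_mul (by omega)
    · exact exists_orthogonal_of_mod_four_ne_zero h₄ (by omega)
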